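/- arXiv:1608.05346 — 3 statements merged into one kernel-verified Lean document; each statement's English description precedes it below -/
import Mathlib

section
/- One-step guarantee of greedy maximization: let f be a monotone submodular set function on finite subsets of V, let O be a finite set with |O| ≤ k and k ≥ 1, and let S be any finite set. If v maximizes the marginal gain f_u(S) = f(S∪{u}) − f(S) over all u ∈ V, then f(S∪{v}) − f(S) ≥ (f(O) − f(S))/k; equivalently, f(O) − f(S∪{v}) ≤ (1 − 1/k)·(f(O) − f(S)). -/
/-- One-step guarantee of greedy maximization: if `v` maximizes the marginal
gain over all elements, `|O| ≤ k` and `k ≥ 1`, then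
`f(S∪{v}) − f(S) ≥ (f(O) − f(S))/k`, equivalently
`f(O) − f(S∪{v}) ≤ (1 − 1/k)·(f(O) − f(S))`. -/
theorem greedy_one_step {V : Type*} [Fintype V] [DecidableEq V]
    (f : Finset V → ℝ)
    (hmono : ∀ S T : Finset V, S ⊆ T → f S ≤ f T)
    (hsub : ∀ S T : Finset V, ∀ u : V, S ⊆ T → u ∉ T →
      f (insert u T) - f T ≤ f (insert u S) - f S)
    (k : ℕ) (hk : 1 ≤ k) (O : Finset V) (hO : O.card ≤ k)
    (S : Finset V) (v : V)
    (hv : ∀ u : V, f (insert u S) - f S ≤ f (insert v S) - f S) :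
    (f O - f S) / (k : ℝ) ≤ f (insert v S) - f S ∧
    f O - f (insert v S) ≤ (1 - 1 / (k : ℝ)) * (f O - f S) := by
  have hd : 0 ≤ f (insert v S) - f S :=
    sub_nonneg.2 (hmono _ _ (Finset.subset_insert v S))
  have key : ∀ A : Finset V, f (A ∪ S) - f S ≤ (A.card : ℝ) * (f (insert v S) - f S) := by
    intro A
    induction A using Finset.induction_on with
    | empty => simp
    | insert a A ha ih =>
      rw [Finset.card_insert_of_notMem ha, Finset.insert_union]
      push_cast
      by_cases h : a ∈ A ∪ S
      · rw [Finset.insert_eq_of_mem h]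
        linarith
      · have h1 := hsub S (A ∪ S) a Finset.subset_union_right h
        have h2 := hv a
        linarith
  have hk0 : (0 : ℝ) < k := by exact_mod_cast hk
  have hOk : (O.card : ℝ) ≤ k := by exact_mod_cast hO
  have h1 : (f O - f S) / (k : ℝ) ≤ f (insert v S) - f S := by
    rw [div_le_iff₀ hk0]
    have h2 := key O
    have h3 := hmono O (O ∪ S) Finset.subset_union_left
    have h4 := mul_le_mul_of_nonneg_right hOk hd
    linarith
  refine ⟨h1, ?_⟩
  have h5 : (1 - 1 / (k : ℝ)) * (f O - f S) = (f O - f S) - (f O - f S) / (k : ℝ) := by ring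
  rw [h5]
  linarith
end

section
/- (Theorem 2) Greedy achieves a (1−1/e)-approximation for cardinality-constrained monotone submodular maximization: let f be a monotone submodular set function on finite subsets of V with f(∅) = 0, and let k ≥ 1. Define S_0 = ∅ and for i = 0, …, k−1 let S_{i+1} = S_i ∪ {v_i} where v_i maximizes the marginal gain f(S_i∪{u}) − f(S_i) over u ∈ V \ S_i. Then f(S_k) ≥ (1 − 1/e) · max { f(S) : S ⊆ V, |S| = k }. -/
/-- Theorem 2: greedy achieves a `(1 − 1/e)`-approximation for
cardinality-constrained monotone submodular maximization. Starting from
`S 0 = ∅`, at each step the element of maximum marginal gain among the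
remaining elements is added; the final set `S k` satisfies
`f(S k) ≥ (1 − 1/e) · f(O)` for every `O ⊆ V` with `|O| = k`. -/
theorem greedy_one_sub_inv_e_approximation {V : Type*} [Fintype V] [DecidableEq V]
    (k : ℕ) (hk : 1 ≤ k) (hcard : k ≤ Fintype.card V)
    (f : Finset V → ℝ) (hnorm : f ∅ = 0)
    (hmono : ∀ S T : Finset V, S ⊆ T → f S ≤ f T)
    (hsub : ∀ S T : Finset V, ∀ u : V, S ⊆ T → u ∉ T →
      f (insert u T) - f T ≤ f (insert u S) - f S)
    (S : ℕ → Finset V) (v : ℕ → V) (hS0 : S 0 = ∅)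
    (hstep : ∀ i < k, v i ∉ S i ∧ S (i + 1) = insert (v i) (S i) ∧
      ∀ u : V, u ∉ S i →
        f (insert u (S i)) - f (S i) ≤ f (insert (v i) (S i)) - f (S i)) :
    ∀ O : Finset V, O.card = k → (1 - 1 / Real.exp 1) * f O ≤ f (S k) := by
  intro O hO
  have hkr : (0 : ℝ) < k := by exact_mod_cast hk
  have key : ∀ i < k, ∀ T : Finset V,
      f (T ∪ S i) - f (S i) ≤ (T.card : ℝ) * (f (S (i + 1)) - f (S i)) := by
    intro i hi T
    obtain ⟨-, h2, h3⟩ := hstep i hi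
    have hg : 0 ≤ f (S (i + 1)) - f (S i) := by
      have := hmono (S i) (S (i + 1)) (by rw [h2]; exact Finset.subset_insert _ _)
      linarith
    induction T using Finset.induction_on with
    | empty => simp
    | insert a T ha ih =>
      rw [Finset.card_insert_of_notMem ha, Finset.insert_union]
      push_cast
      by_cases hm : a ∈ T ∪ S i
      · rw [Finset.insert_eq_of_mem hm]
        linarith
      · have h4 := hsub (S i) (T ∪ S i) a Finset.subset_union_right hm
        have h5 := h3 a (fun h => hm (Finset.mem_union_right _ h))
        rw [← h2] at h5
        linarith
  have step : ∀ i < k, f O - f (S (i + 1)) ≤ (1 - 1 / (k : ℝ)) * (f O - f (S i)) := by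
    intro i hi
    have h1 := key i hi O
    rw [hO] at h1
    have h2 := hmono O (O ∪ S i) Finset.subset_union_left
    have h3 : (f O - f (S i)) / k ≤ f (S (i + 1)) - f (S i) := by
      rw [div_le_iff₀ hkr]; linarith
    have h4 : (1 - 1 / (k : ℝ)) * (f O - f (S i)) = (f O - f (S i)) - (f O - f (S i)) / k := by
      ring
    linarith
  have hr : 0 ≤ 1 - 1 / (k : ℝ) := by
    rw [sub_nonneg, div_le_one hkr]; exact_mod_cast hk
  have main : ∀ i ≤ k, f O - f (S i) ≤ (1 - 1 / (k : ℝ)) ^ i * f O := by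
    intro i
    induction i with
    | zero => intro _; simp [hS0, hnorm]
    | succ i ih =>
      intro hi
      calc _ ≤ (1 - 1 / (k : ℝ)) * (f O - f (S i)) := step i hi
        _ ≤ (1 - 1 / (k : ℝ)) * ((1 - 1 / (k : ℝ)) ^ i * f O) :=
          mul_le_mul_of_nonneg_left (ih (by omega)) hr
        _ = _ := by ring
  have hO0 : 0 ≤ f O := by
    rw [← hnorm]; exact hmono _ _ (Finset.empty_subset _)
  have he : (1 - 1 / (k : ℝ)) ^ k ≤ 1 / Real.exp 1 := by
    have := Real.one_sub_div_pow_le_exp_neg (n := k) (t := 1) (by exact_mod_cast hk)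
    rwa [Real.exp_neg, ← one_div] at this
  have h1 := main k le_rfl
  have h2 := mul_le_mul_of_nonneg_right he hO0
  linarith
end

section
/- (Star lemma for Theorem 4) Let G be a finite simple graph, f a monotone submodular set function on finite subsets of V(G), S a finite set of vertices, v a vertex, and ρ ≥ 1 a real number. If the marginal gain of v satisfies f_v(S) ≥ (1/ρ) · Σ_{w ∈ N_G(v)} f_w(S), then for every independent set I of G contained in the closed neighborhood N_G⁺(v) = {v} ∪ N_G(v), one has ρ · f_v(S) ≥ f(S ∪ I) − f(S). -/
/-- Star lemma for Theorem 4: if the marginal gain of `v` satisfies the local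
maximality condition `f_v(S) ≥ (1/ρ)·Σ_{w ∈ N(v)} f_w(S)` with `ρ ≥ 1`, then
for every independent set `I ⊆ N⁺(v) = {v} ∪ N(v)`,
`ρ · f_v(S) ≥ f(S ∪ I) − f(S)`. -/
theorem star_lemma {V : Type*} [Fintype V] [DecidableEq V]
    (G : SimpleGraph V) [DecidableRel G.Adj]
    (f : Finset V → ℝ)
    (hmono : ∀ S T : Finset V, S ⊆ T → f S ≤ f T)
    (hsub : ∀ S T : Finset V, ∀ u : V, S ⊆ T → u ∉ T →
      f (insert u T) - f T ≤ f (insert u S) - f S)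
    (S : Finset V) (v : V) (ρ : ℝ) (hρ : 1 ≤ ρ)
    (hloc : (1 / ρ) * ∑ w ∈ G.neighborFinset v, (f (insert w S) - f S) ≤
      f (insert v S) - f S) :
    ∀ I : Finset V, (∀ a ∈ I, ∀ b ∈ I, ¬ G.Adj a b) →
      I ⊆ insert v (G.neighborFinset v) →
      f (S ∪ I) - f S ≤ ρ * (f (insert v S) - f S) := by
  intro I hI hIN
  have hnn : ∀ w, 0 ≤ f (insert w S) - f S := fun w =>
    sub_nonneg.2 (hmono _ _ (Finset.subset_insert w S))
  have key : ∀ J : Finset V, f (S ∪ J) - f S ≤ ∑ w ∈ J, (f (insert w S) - f S) := by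
    intro J
    induction J using Finset.induction_on with
    | empty => simp
    | insert a J ha ih =>
      rw [Finset.sum_insert ha, Finset.union_insert]
      by_cases h : a ∈ S ∪ J
      · rw [Finset.insert_eq_of_mem h]
        linarith [hnn a]
      · linarith [hsub S (S ∪ J) a Finset.subset_union_left h]
  by_cases hv : v ∈ I
  · have hIv : I ⊆ {v} := by
      intro w hw
      rcases Finset.mem_insert.1 (hIN hw) with h | h
      · simp [h]
      · exact absurd ((G.mem_neighborFinset v w).1 h) (hI v hv w hw)
    have h1 : f (S ∪ I) ≤ f (insert v S) := by
      apply hmono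
      intro x hx
      rcases Finset.mem_union.1 hx with h | h
      · exact Finset.mem_insert_of_mem h
      · exact Finset.mem_insert.2 (Or.inl (Finset.mem_singleton.1 (hIv h)))
    nlinarith [hnn v]
  · have hIN' : I ⊆ G.neighborFinset v := by
      intro w hw
      rcases Finset.mem_insert.1 (hIN hw) with h | h
      · exact absurd (h ▸ hw) hv
      · exact h
    have h2 := Finset.sum_le_sum_of_subset_of_nonneg hIN'
      (f := fun w => f (insert w S) - f S) (fun w _ _ => hnn w)
    have hp : 0 < ρ := by linarith
    have h3 := mul_le_mul_of_nonneg_left hloc hp.le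
    rw [← mul_assoc, mul_one_div_cancel hp.ne', one_mul] at h3
    exact (key I).trans (h2.trans h3)
end
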